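/- Let u: ℝ^n → ℝ be a spacelike convex C² function, and fix x'₀ ∈ ℝ^{n−2}. Define ũ(x₁,x₂) := u(x₁,x₂,x'₀). Then the mean curvature of the graph of ũ in ℝ^{2,1} satisfies H₁[ũ](x₁,x₂) ≤ H₁[u](x₁,x₂,x'₀) for all (x₁,x₂) ∈ ℝ². -/

import Mathlib

open Finset

noncomputable def pd {m : ℕ} (u : (Fin m → ℝ) → ℝ) (i : Fin m) (x : Fin m → ℝ) : ℝ :=
  fderiv ℝ u x (Pi.single i 1)

noncomputable def H1 {m : ℕ} (u : (Fin m → ℝ) → ℝ) (x : Fin m → ℝ) : ℝ :=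
  ∑ i, pd (fun y => pd u i y / Real.sqrt (1 - ∑ j, (pd u j y) ^ 2)) i x

def Spacelike {m : ℕ} (u : (Fin m → ℝ) → ℝ) : Prop :=
  ∀ x, ∑ j, (pd u j x) ^ 2 < 1

/-!
For a graph with gradient `a` and Hessian `M`, the mean curvature is `(1 - |a|²)^(-1/2) tr (g⁻¹ M)`,
where `g = 1 - a aᵀ` is the induced metric. Slicing by an isometric affine map with linear part `E`
replaces `a`, `g` and `M` by `Eᵀ a`, `Eᵀ g E` and `Eᵀ M E`. The scalar factor cannot increase
because `|Eᵀ a| ≤ |a|`, and the trace of `M ≥ 0` with respect to `g` cannot increase because the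
directions `g`-orthogonal to the slice contribute nonnegatively to it.
-/

open Matrix
open scoped Topology

section TraceMonotonicity

open scoped ComplexOrder

variable {𝕜 ι κ : Type*} [RCLike 𝕜] [Fintype ι] [Fintype κ]

lemma trace_mul_nonneg_of_posSemidef {A B : Matrix ι ι 𝕜} (hA : A.PosSemidef)
    (hB : B.PosSemidef) : 0 ≤ (A * B).trace := by
  obtain ⟨r, v, rfl⟩ := posSemidef_iff_eq_sum_vecMulVec.1 hB
  rw [mul_sum, trace_sum]
  refine sum_nonneg fun k _ => ?_
  rw [mul_vecMulVec, trace_vecMulVec, dotProduct_comm]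
  exact hA.dotProduct_mulVec_nonneg (v k)

variable [DecidableEq ι] [DecidableEq κ]

-- Writing `P` for the difference, `P * G` is the `G`-orthogonal projection with kernel the range of
-- `E`, so `P = P * G * P`.
lemma posSemidef_inv_sub_compression {G : Matrix κ κ 𝕜} (hG : G.PosDef) {E : Matrix κ ι 𝕜}
    (hE : Function.Injective E.mulVec) :
    (G⁻¹ - E * (Eᴴ * G * E)⁻¹ * Eᴴ).PosSemidef := by
  set Q := E * (Eᴴ * G * E)⁻¹ * Eᴴ with hQ
  have hGE : (Eᴴ * G * E).PosDef := hG.conjTranspose_mul_mul_same hE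
  have hGdet : IsUnit G.det := (isUnit_iff_isUnit_det G).1 hG.isUnit
  have hGEdet : IsUnit (Eᴴ * G * E).det := (isUnit_iff_isUnit_det _).1 hGE.isUnit
  have hQGQ : Q * G * Q = Q := calc
    Q * G * Q = E * ((Eᴴ * G * E)⁻¹ * (Eᴴ * G * E)) * (Eᴴ * G * E)⁻¹ * Eᴴ := by
      simp only [hQ, Matrix.mul_assoc]
    _ = Q := by rw [nonsing_inv_mul _ hGEdet, Matrix.mul_one]
  have hP : (G⁻¹ - Q)ᴴ * G * (G⁻¹ - Q) = G⁻¹ - Q := by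
    have hherm : (G⁻¹ - Q)ᴴ = G⁻¹ - Q :=
      (hG.inv.isHermitian.sub (isHermitian_mul_mul_conjTranspose E hGE.inv.isHermitian)).eq
    rw [hherm, Matrix.sub_mul, Matrix.sub_mul, Matrix.mul_sub, Matrix.mul_sub,
      nonsing_inv_mul _ hGdet, Matrix.one_mul, Matrix.one_mul, hQGQ,
      mul_nonsing_inv_cancel_right _ _ hGdet, sub_self, sub_zero]
  exact hP ▸ hG.posSemidef.conjTranspose_mul_mul_same (G⁻¹ - Q)

lemma trace_inv_mul_compression_le {G M : Matrix κ κ 𝕜} (hG : G.PosDef) (hM : M.PosSemidef)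
    {E : Matrix κ ι 𝕜} (hE : Function.Injective E.mulVec) :
    ((Eᴴ * G * E)⁻¹ * (Eᴴ * M * E)).trace ≤ (G⁻¹ * M).trace := by
  have htrace : ((Eᴴ * G * E)⁻¹ * (Eᴴ * M * E)).trace
      = (E * (Eᴴ * G * E)⁻¹ * Eᴴ * M).trace := by
    rw [← Matrix.mul_assoc, trace_mul_comm]
    simp only [Matrix.mul_assoc]
  rw [htrace, ← sub_nonneg, ← trace_sub, ← Matrix.sub_mul]
  exact trace_mul_nonneg_of_posSemidef (posSemidef_inv_sub_compression hG hE) hM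

end TraceMonotonicity

lemma transpose_mulVec_dotProduct_self_le {R ι κ : Type*} [CommRing R] [LinearOrder R]
    [IsStrictOrderedRing R] [Fintype ι] [DecidableEq ι] [Fintype κ] {E : Matrix κ ι R}
    (hE : Eᵀ * E = 1) (a : κ → R) :
    Eᵀ *ᵥ a ⬝ᵥ Eᵀ *ᵥ a ≤ a ⬝ᵥ a := by
  have hproj : (a - E *ᵥ Eᵀ *ᵥ a) ⬝ᵥ (a - E *ᵥ Eᵀ *ᵥ a) = a ⬝ᵥ a - Eᵀ *ᵥ a ⬝ᵥ Eᵀ *ᵥ a := by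
    have hcross : a ⬝ᵥ E *ᵥ Eᵀ *ᵥ a = Eᵀ *ᵥ a ⬝ᵥ Eᵀ *ᵥ a := by
      rw [dotProduct_mulVec, ← mulVec_transpose]
    have hnorm : E *ᵥ Eᵀ *ᵥ a ⬝ᵥ E *ᵥ Eᵀ *ᵥ a = Eᵀ *ᵥ a ⬝ᵥ Eᵀ *ᵥ a := by
      rw [dotProduct_mulVec, ← mulVec_transpose, mulVec_mulVec, hE, one_mulVec]
    rw [sub_dotProduct, dotProduct_sub, dotProduct_sub, dotProduct_comm (E *ᵥ Eᵀ *ᵥ a) a, hcross,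
      hnorm, sub_self, sub_zero]
  rw [← sub_nonneg, ← hproj]
  exact sum_nonneg fun i _ => mul_self_nonneg _

section GraphMeanCurvature

variable {ι κ : Type*} [DecidableEq ι] [DecidableEq κ] [Fintype κ] {E : Matrix κ ι ℝ}

/-- The metric induced by Minkowski space on the tangent plane `{(v, a ⬝ᵥ v)}` of a graph with
gradient `a`, in the coordinates `v` of the domain. -/
def inducedMetric (a : ι → ℝ) : Matrix ι ι ℝ := 1 - vecMulVec a a

lemma inducedMetric_transpose_mulVec (hE : Eᵀ * E = 1) (a : κ → ℝ) :
    inducedMetric (Eᵀ *ᵥ a) = Eᵀ * inducedMetric a * E := by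
  rw [inducedMetric, inducedMetric, Matrix.mul_sub, Matrix.sub_mul, Matrix.mul_one, hE,
    mul_vecMulVec, vecMulVec_mul, mulVec_transpose]

variable [Fintype ι]

/-- The mean curvature (trace of the second fundamental form `M / √(1 - |a|²)` with respect to the
induced metric) of a graph in Minkowski space whose gradient is `a` and whose Hessian is `M`. -/
noncomputable def graphMeanCurvature (a : ι → ℝ) (M : Matrix ι ι ℝ) : ℝ :=
  (√(1 - a ⬝ᵥ a))⁻¹ * ((inducedMetric a)⁻¹ * M).trace

lemma posDef_inducedMetric {a : ι → ℝ} (ha : a ⬝ᵥ a < 1) : (inducedMetric a).PosDef := by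
  refine .of_dotProduct_mulVec_pos (isHermitian_one.sub ?_) fun v hv => ?_
  · simp [IsHermitian]
  · have hv_pos : 0 < v ⬝ᵥ v := by simpa using dotProduct_star_self_pos_iff.2 hv
    have hcauchy : (a ⬝ᵥ v) ^ 2 ≤ (a ⬝ᵥ a) * (v ⬝ᵥ v) := by
      simpa only [dotProduct, ← pow_two] using sum_mul_sq_le_sq_mul_sq univ a v
    have hform : star v ⬝ᵥ inducedMetric a *ᵥ v = v ⬝ᵥ v - (a ⬝ᵥ v) ^ 2 := by
      simp [inducedMetric, sub_mulVec, vecMulVec_mulVec, dotProduct_comm v a, pow_two]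
    rw [hform]
    nlinarith

lemma inv_inducedMetric {a : ι → ℝ} (ha : a ⬝ᵥ a ≠ 1) :
    (inducedMetric a)⁻¹ = 1 + (1 - a ⬝ᵥ a)⁻¹ • vecMulVec a a := by
  have hne : 1 - a ⬝ᵥ a ≠ 0 := sub_ne_zero.2 ha.symm
  refine inv_eq_right_inv ?_
  rw [inducedMetric, Matrix.sub_mul, Matrix.one_mul, Matrix.mul_add, Matrix.mul_one,
    Matrix.mul_smul, vecMulVec_mul_vecMulVec, vecMulVec_smul]
  match_scalars
  · rfl
  · field_simp
    ring

lemma graphMeanCurvature_eq {a : ι → ℝ} (ha : a ⬝ᵥ a ≠ 1) (M : Matrix ι ι ℝ) :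
    graphMeanCurvature a M
      = (√(1 - a ⬝ᵥ a))⁻¹ * (M.trace + (1 - a ⬝ᵥ a)⁻¹ * (a ⬝ᵥ M *ᵥ a)) := by
  rw [graphMeanCurvature, inv_inducedMetric ha, Matrix.add_mul, Matrix.one_mul, trace_add,
    Matrix.smul_mul, trace_smul, vecMulVec_mul, trace_vecMulVec, dotProduct_mulVec,
    dotProduct_comm a (a ᵥ* M), smul_eq_mul]

theorem graphMeanCurvature_compression_le {a : κ → ℝ} {M : Matrix κ κ ℝ} (ha : a ⬝ᵥ a < 1)
    (hM : M.PosSemidef) (hE : Eᵀ * E = 1) :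
    graphMeanCurvature (Eᵀ *ᵥ a) (Eᵀ * M * E) ≤ graphMeanCurvature a M := by
  have hinj : Function.Injective E.mulVec := by
    refine Function.LeftInverse.injective (g := Eᵀ.mulVec) fun v => ?_
    rw [mulVec_mulVec, hE, one_mulVec]
  have hnonneg : 0 ≤ ((inducedMetric a)⁻¹ * M).trace :=
    trace_mul_nonneg_of_posSemidef (posDef_inducedMetric ha).inv.posSemidef hM
  have hweight : (√(1 - Eᵀ *ᵥ a ⬝ᵥ Eᵀ *ᵥ a))⁻¹ ≤ (√(1 - a ⬝ᵥ a))⁻¹ :=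
    inv_anti₀ (Real.sqrt_pos.2 (sub_pos.2 ha))
      (Real.sqrt_le_sqrt (sub_le_sub_left (transpose_mulVec_dotProduct_self_le hE a) 1))
  have htrace : ((inducedMetric (Eᵀ *ᵥ a))⁻¹ * (Eᵀ * M * E)).trace
      ≤ ((inducedMetric a)⁻¹ * M).trace := by
    simpa only [inducedMetric_transpose_mulVec hE, conjTranspose_eq_transpose_of_trivial] using
      trace_inv_mul_compression_le (posDef_inducedMetric ha) hM hinj
  calc graphMeanCurvature (Eᵀ *ᵥ a) (Eᵀ * M * E)
      ≤ (√(1 - Eᵀ *ᵥ a ⬝ᵥ Eᵀ *ᵥ a))⁻¹ * ((inducedMetric a)⁻¹ * M).trace :=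
        mul_le_mul_of_nonneg_left htrace (by positivity)
    _ ≤ graphMeanCurvature a M := mul_le_mul_of_nonneg_right hweight hnonneg

end GraphMeanCurvature

section Calculus

variable {k m : ℕ} {u f g : (Fin m → ℝ) → ℝ} {x : Fin m → ℝ}

/-- The Euclidean gradient of `u`, as the vector of its partial derivatives `pd`. -/
noncomputable def grad (u : (Fin m → ℝ) → ℝ) (x : Fin m → ℝ) : Fin m → ℝ :=
  fun i => pd u i x

/-- The Hessian matrix of `u`; row `i` differentiates the gradient in direction `i`. -/
noncomputable def hessian (u : (Fin m → ℝ) → ℝ) (x : Fin m → ℝ) : Matrix (Fin m) (Fin m) ℝ :=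
  Matrix.of fun i j => pd (pd u j) i x

lemma fderiv_eq_grad_dotProduct (u : (Fin m → ℝ) → ℝ) (x v : Fin m → ℝ) :
    fderiv ℝ u x v = grad u x ⬝ᵥ v := by
  conv_lhs => rw [pi_eq_sum_univ' v, map_sum]
  refine sum_congr rfl fun i _ => ?_
  rw [map_smul, smul_eq_mul, mul_comm]
  rfl

lemma sum_pd_sq_eq_grad_dotProduct_self (u : (Fin m → ℝ) → ℝ) (x : Fin m → ℝ) :
    ∑ j, pd u j x ^ 2 = grad u x ⬝ᵥ grad u x :=
  sum_congr rfl fun _ _ => pow_two _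

lemma differentiableAt_pd (hu : ContDiffAt ℝ 2 u x) (i : Fin m) :
    DifferentiableAt ℝ (pd u i) x :=
  ((hu.fderiv_right (m := 1) (by norm_num)).differentiableAt one_ne_zero).clm_apply
    (differentiableAt_const _)

lemma eventually_differentiableAt (hu : ContDiffAt ℝ 2 u x) :
    ∀ᶠ y in 𝓝 x, DifferentiableAt ℝ u y :=
  (hu.eventually (by simp)).mono fun _ hy => hy.differentiableAt two_ne_zero

lemma hasDerivAt_comp_line {v : Fin m → ℝ} {t : ℝ} (hf : DifferentiableAt ℝ f (x + t • v)) :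
    HasDerivAt (fun s : ℝ => f (x + s • v)) (grad f (x + t • v) ⬝ᵥ v) t := by
  have hline : HasDerivAt (fun s : ℝ => x + s • v) v t := by
    simpa using ((hasDerivAt_id t).smul_const v).const_add x
  rw [← fderiv_eq_grad_dotProduct]
  exact hf.hasFDerivAt.comp_hasDerivAt t hline

lemma isSymm_hessian (hu : ContDiffAt ℝ 2 u x) : (hessian u x).IsSymm := by
  have hdiff : DifferentiableAt ℝ (fderiv ℝ u) x :=
    (hu.fderiv_right (m := 1) (by norm_num)).differentiableAt one_ne_zero
  have hentry (i j : Fin m) :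
      hessian u x i j = fderiv ℝ (fderiv ℝ u) x (Pi.single i 1) (Pi.single j 1) := by
    change fderiv ℝ (fun y => fderiv ℝ u y (Pi.single j 1)) x (Pi.single i 1) = _
    rw [fderiv_clm_apply hdiff (differentiableAt_const _)]
    simp
  have hsymm : IsSymmSndFDerivAt ℝ u x := hu.isSymmSndFDerivAt (by simp)
  ext i j
  rw [transpose_apply, hentry, hentry, hsymm]

lemma hasDerivAt_grad_dotProduct_line (hu : ContDiffAt ℝ 2 u x) (v : Fin m → ℝ) :
    HasDerivAt (fun t : ℝ => grad u (x + t • v) ⬝ᵥ v) (v ⬝ᵥ hessian u x *ᵥ v) 0 := by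
  have hpd (j : Fin m) : HasDerivAt (fun t : ℝ => pd u j (x + t • v)) ((v ᵥ* hessian u x) j) 0 := by
    have hline := hasDerivAt_comp_line (v := v) (t := 0)
      (by simpa using differentiableAt_pd hu j)
    rw [zero_smul, add_zero, dotProduct_comm] at hline
    exact hline
  rw [dotProduct_mulVec]
  exact HasDerivAt.fun_sum fun j _ => (hpd j).mul_const (v j)

theorem posSemidef_hessian_of_convexOn {s : Set (Fin m → ℝ)} (hs : s ∈ 𝓝 x)
    (hu : ContDiffAt ℝ 2 u x) (hconv : ConvexOn ℝ s u) : (hessian u x).PosSemidef := by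
  refine .of_dotProduct_mulVec_nonneg (isSymm_hessian hu) fun v => ?_
  rw [star_trivial]
  obtain ⟨ε, hε, hball⟩ := Metric.mem_nhds_iff.1
    (Filter.inter_mem hs (eventually_differentiableAt hu))
  let line : ℝ →ᵃ[ℝ] (Fin m → ℝ) := AffineMap.lineMap x (x + v)
  have hline : ∀ t, line t = x + t • v := fun t => by simp [line, AffineMap.lineMap_apply, add_comm]
  let I : Set ℝ := line ⁻¹' Metric.ball x ε
  have hIconv : ConvexOn ℝ I (u ∘ line) :=
    (hconv.subset (fun y hy => (hball hy).1) (convex_ball x ε)).comp_affineMap line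
  have hderiv : ∀ t ∈ I, HasDerivAt (u ∘ line) (grad u (x + t • v) ⬝ᵥ v) t := fun t ht => by
    have hdiff : DifferentiableAt ℝ u (x + t • v) := hline t ▸ (hball ht).2
    simpa only [Function.comp_def, hline] using hasDerivAt_comp_line hdiff
  have hmono : MonotoneOn (fun t : ℝ => grad u (x + t • v) ⬝ᵥ v) I :=
    (hIconv.monotoneOn_deriv fun t ht => (hderiv t ht).differentiableAt).congr
      fun t ht => (hderiv t ht).deriv
  have hI_nhds : I ∈ 𝓝 (0 : ℝ) :=
    line.continuous_of_finiteDimensional.continuousAt.preimage_mem_nhds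
      (by simpa [hline] using Metric.ball_mem_nhds x hε)
  rw [← (hasDerivAt_grad_dotProduct_line hu v).deriv, ← derivWithin_of_mem_nhds hI_nhds]
  exact hmono.derivWithin_nonneg

section AffinePullback

variable {E : Matrix (Fin m) (Fin k) ℝ} {c : Fin m → ℝ} {q : Fin k → ℝ}

lemma hasFDerivAt_affine (E : Matrix (Fin m) (Fin k) ℝ) (c : Fin m → ℝ) (q : Fin k → ℝ) :
    HasFDerivAt (fun q => E *ᵥ q + c) E.mulVecLin.toContinuousLinearMap q :=
  E.mulVecLin.toContinuousLinearMap.hasFDerivAt.add_const c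

lemma grad_comp_affine (hf : DifferentiableAt ℝ f (E *ᵥ q + c)) :
    grad (fun q => f (E *ᵥ q + c)) q = Eᵀ *ᵥ grad f (E *ᵥ q + c) := by
  ext i
  have hcomp := (hf.hasFDerivAt.comp q (hasFDerivAt_affine E c q)).fderiv
  rw [mulVec_transpose, ← dotProduct_single_one (grad f _ ᵥ* E) i, ← dotProduct_mulVec,
    ← fderiv_eq_grad_dotProduct]
  exact congr($hcomp (Pi.single i 1))

lemma hessian_comp_affine (hu : ContDiffAt ℝ 2 u (E *ᵥ q + c)) :
    hessian (fun q => u (E *ᵥ q + c)) q = Eᵀ * hessian u (E *ᵥ q + c) * E := by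
  ext i j
  have hpd : pd (fun q => u (E *ᵥ q + c)) j
      =ᶠ[𝓝 q] fun q => ∑ l, E l j * pd u l (E *ᵥ q + c) :=
    ((hasFDerivAt_affine E c q).continuousAt.eventually (eventually_differentiableAt hu)).mono
      fun q' hq' => congrFun (grad_comp_affine hq') j
  have hentry (l : Fin m) :
      pd (fun q => pd u l (E *ᵥ q + c)) i q = (Eᵀ * hessian u (E *ᵥ q + c)) i l :=
    congrFun (grad_comp_affine (differentiableAt_pd hu l)) i
  have hterm (l : Fin m) : DifferentiableAt ℝ (fun q => pd u l (E *ᵥ q + c)) q :=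
    DifferentiableAt.fun_comp' (f := fun q => E *ᵥ q + c) q (differentiableAt_pd hu l)
      (hasFDerivAt_affine E c q).differentiableAt
  calc hessian (fun q => u (E *ᵥ q + c)) q i j
      = pd (fun q => ∑ l, E l j * pd u l (E *ᵥ q + c)) i q := congr($hpd.fderiv_eq (Pi.single i 1))
    _ = ∑ l, E l j * pd (fun q => pd u l (E *ᵥ q + c)) i q := by
      rw [pd, (HasFDerivAt.fun_sum fun l _ => (hterm l).hasFDerivAt.const_mul (E l j)).fderiv]
      simp [pd]
    _ = (Eᵀ * hessian u (E *ᵥ q + c) * E) i j := by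
      simp only [hentry, mul_comm (E _ j)]
      rfl

end AffinePullback

lemma hasDerivAt_pd (hf : DifferentiableAt ℝ f x) (i : Fin m) :
    HasDerivAt (fun t : ℝ => f (x + t • Pi.single i 1)) (pd f i x) 0 := by
  have hline := hasDerivAt_comp_line (v := Pi.single i 1) (t := 0) (by simpa using hf)
  rwa [dotProduct_single_one, zero_smul, add_zero] at hline

lemma pd_div_sqrt (hf : DifferentiableAt ℝ f x) (hg : DifferentiableAt ℝ g x) (hpos : 0 < g x)
    (i : Fin m) :
    pd (fun y => f y / √(g y)) i x
      = (√(g x))⁻¹ * (pd f i x - f x * pd g i x / (2 * g x)) := by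
  have hsqrt : √(g x) ≠ 0 := (Real.sqrt_pos.2 hpos).ne'
  have hquot : DifferentiableAt ℝ (fun y => f y / √(g y)) x := by
    simpa only [div_eq_mul_inv] using hf.fun_mul ((hg.sqrt hpos.ne').fun_inv hsqrt)
  have hderiv := (hasDerivAt_pd hf i).fun_div ((hasDerivAt_pd hg i).sqrt (by simpa using hpos.ne'))
    (by simpa using hsqrt)
  rw [(hasDerivAt_pd hquot i).unique hderiv]
  simp only [zero_smul, add_zero, Real.sq_sqrt hpos.le]
  field_simp
  rw [Real.sq_sqrt hpos.le]
  ring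

lemma pd_one_sub_sum_pd_sq (hu : ContDiffAt ℝ 2 u x) (i : Fin m) :
    pd (fun y => 1 - ∑ j, pd u j y ^ 2) i x = -2 * (hessian u x *ᵥ grad u x) i := by
  have hderiv := (HasFDerivAt.fun_sum (u := univ) fun j _ =>
    (differentiableAt_pd hu j).hasFDerivAt.pow 2).const_sub 1
  rw [pd, hderiv.fderiv, mulVec, dotProduct, mul_sum]
  simp [hessian, grad, pd, mul_comm, mul_left_comm]

theorem H1_eq_graphMeanCurvature (hu : ContDiffAt ℝ 2 u x) (hx : grad u x ⬝ᵥ grad u x < 1) :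
    H1 u x = graphMeanCurvature (grad u x) (hessian u x) := by
  have hpd := differentiableAt_pd hu
  have hpos : 0 < 1 - ∑ j, pd u j x ^ 2 := by
    rwa [sum_pd_sq_eq_grad_dotProduct_self, sub_pos]
  have hsummand (i : Fin m) : pd (fun y => pd u i y / √(1 - ∑ j, pd u j y ^ 2)) i x
      = (√(1 - grad u x ⬝ᵥ grad u x))⁻¹ * (hessian u x i i
        + (1 - grad u x ⬝ᵥ grad u x)⁻¹ * (grad u x i * (hessian u x *ᵥ grad u x) i)) := by
    rw [pd_div_sqrt (hpd i) (by fun_prop) hpos, pd_one_sub_sum_pd_sq hu,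
      sum_pd_sq_eq_grad_dotProduct_self]
    simp only [hessian, grad, of_apply]
    field_simp
    ring
  rw [graphMeanCurvature_eq hx.ne, H1, sum_congr rfl fun i _ => hsummand i, ← mul_sum,
    sum_add_distrib, ← mul_sum]
  rfl

end Calculus

section Slice

variable {k m n : ℕ}

theorem mean_curvature_of_slice_general {u : (Fin m → ℝ) → ℝ} {E : Matrix (Fin m) (Fin k) ℝ}
    (hE : Eᵀ * E = 1) {c : Fin m → ℝ} {p : Fin k → ℝ} (hu : ContDiffAt ℝ 2 u (E *ᵥ p + c))
    (hsp : grad u (E *ᵥ p + c) ⬝ᵥ grad u (E *ᵥ p + c) < 1)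
    (hhess : (hessian u (E *ᵥ p + c)).PosSemidef) :
    H1 (fun q => u (E *ᵥ q + c)) p ≤ H1 u (E *ᵥ p + c) := by
  have hgrad := grad_comp_affine (hu.differentiableAt two_ne_zero)
  have hslice : ContDiffAt ℝ 2 (fun q => u (E *ᵥ q + c)) p :=
    hu.comp p (E.mulVecLin.toContinuousLinearMap.contDiff.add contDiff_const).contDiffAt
  have hsp_slice : grad (fun q => u (E *ᵥ q + c)) p ⬝ᵥ grad (fun q => u (E *ᵥ q + c)) p < 1 := by
    rw [hgrad]
    exact (transpose_mulVec_dotProduct_self_le hE _).trans_lt hsp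
  rw [H1_eq_graphMeanCurvature hslice hsp_slice, H1_eq_graphMeanCurvature hu hsp, hgrad,
    hessian_comp_affine hu]
  exact graphMeanCurvature_compression_le hsp hhess hE

lemma exists_append_eq_mulVec_add (k : ℕ) (x0 : Fin n → ℝ) :
    ∃ (E : Matrix (Fin (k + n)) (Fin k) ℝ) (c : Fin (k + n) → ℝ), Eᵀ * E = 1 ∧
      ∀ q, Fin.append q x0 = E *ᵥ q + c := by
  refine ⟨(1 : Matrix (Fin (k + n)) (Fin (k + n)) ℝ).submatrix id (Fin.castAdd n),
    Fin.append 0 x0, ?_, fun q => ?_⟩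
  · ext i j
    simp [mul_apply, one_apply]
  · ext i
    refine Fin.addCases (fun i => ?_) (fun i => ?_) i
    · simp [mulVec, dotProduct, one_apply]
    · have hne (j : Fin k) : Fin.natAdd k i ≠ Fin.castAdd n j := by
        simp only [ne_eq, Fin.ext_iff, Fin.val_natAdd, Fin.val_castAdd]
        omega
      simp [mulVec, dotProduct, one_apply, hne]

end Slice

theorem mean_curvature_of_slice {n : ℕ} (u : (Fin (2 + n) → ℝ) → ℝ)
    (hu : ContDiff ℝ 2 u) (hsp : Spacelike u)
    (hconv : ConvexOn ℝ Set.univ u)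
    (x0 : Fin n → ℝ) (p : Fin 2 → ℝ) :
    H1 (fun q : Fin 2 → ℝ => u (Fin.append q x0)) p ≤ H1 u (Fin.append p x0) := by
  obtain ⟨E, c, hE, happend⟩ := exists_append_eq_mulVec_add 2 x0
  simpa only [happend] using mean_curvature_of_slice_general hE hu.contDiffAt
    (sum_pd_sq_eq_grad_dotProduct_self u _ ▸ hsp _)
    (posSemidef_hessian_of_convexOn Filter.univ_mem hu.contDiffAt hconv)
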